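/- Let N ≥ 1 and B ≥ 0 be integers, let t_1,…,t_N and y_1,…,y_{2N} be integers with |t_i| ≤ B and |y_j| ≤ B for all i, j, and let C be an integer with C ≥ 3B. Define the (2N+1)-dimensional vectors u = (C, t_1,…,t_N, C,…,C) (with N trailing copies of C) and v = (C, y_1,…,y_{2N}), indexed from 0. Then for every k with 1 ≤ k ≤ N, the (min,+)-convolution satisfies (u ∗ v)_{N+k} = min_{1 ≤ i ≤ N} (t_i + y_{N+k−i}). -/

import Mathlib

/-- The `(min,+)`-convolution of two vectors of length `m` (entries indexed by
`0,…,m−1`), valued in `WithTop ℤ`: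
`(u∗v)_k = min_{0 ≤ i,j ≤ m−1, i+j=k} (u_i + v_j)`
(the minimum over the empty set being `⊤`, which does not occur for
`0 ≤ k ≤ 2m−2`). -/
def minPlusConv (m : ℕ) (u v : ℕ → ℤ) (k : ℕ) : WithTop ℤ :=
  (((Finset.range m) ×ˢ (Finset.range m)).filter (fun p => p.1 + p.2 = k)).inf
    (fun p => ((u p.1 + v p.2 : ℤ) : WithTop ℤ))

/-!
Every pair with first index in `[1, N]` contributes one of the sums `t_i + y_{N+k-i}`, and all of
these sums occur. Any other pair meets a padding entry of `u`, so it contributes at least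
`C - B ≥ 2B`, which is no smaller than `t_1 + y_{N+k-1}`.
-/

section

variable {m n : ℕ} {u v : ℕ → ℤ}

lemma minPlusConv_le_add {i j : ℕ} (hi : i < m) (hj : j < m) (hij : i + j = n) :
    minPlusConv m u v n ≤ ((u i + v j : ℤ) : WithTop ℤ) :=
  Finset.inf_le (f := fun p : ℕ × ℕ => ((u p.1 + v p.2 : ℤ) : WithTop ℤ)) (b := (i, j)) <| by
    simp [hi, hj, hij]

lemma le_minPlusConv_iff {a : WithTop ℤ} :
    a ≤ minPlusConv m u v n ↔
      ∀ i j, i < m → j < m → i + j = n → a ≤ ((u i + v j : ℤ) : WithTop ℤ) := by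
  simp [minPlusConv, Finset.le_inf_iff]

lemma minPlusConv_eq_inf'_of_dominated {s : Finset ℕ} (hs : s.Nonempty)
    (hmem : ∀ i ∈ s, i < m ∧ i ≤ n ∧ n - i < m)
    (hdom : ∀ i j, i < m → j < m → i + j = n → i ∉ s →
      ∃ i' ∈ s, u i' + v (n - i') ≤ u i + v j) :
    minPlusConv m u v n = (s.inf' hs (fun i => u i + v (n - i)) : ℤ) := by
  apply le_antisymm
  · obtain ⟨i, his, hmin⟩ := s.exists_mem_eq_inf' hs (fun i => u i + v (n - i))
    obtain ⟨him, hin, hjm⟩ := hmem i his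
    rw [hmin]
    exact minPlusConv_le_add him hjm (Nat.add_sub_of_le hin)
  · refine le_minPlusConv_iff.mpr fun i j hi hj hij => WithTop.coe_le_coe.mpr ?_
    by_cases his : i ∈ s
    · obtain rfl : j = n - i := by omega
      exact s.inf'_le _ his
    · obtain ⟨i', hi's, hle⟩ := hdom i j hi hj hij his
      exact (s.inf'_le _ hi's).trans hle

end

theorem stmt_8_general (N M n : ℕ) (hN : 1 ≤ N) (hNn : N < n) (hnM : n ≤ M + 1) (b C : ℤ)
    (t y : ℕ → ℤ)
    (hy : ∀ j, 1 ≤ j → j ≤ M → b ≤ y j)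
    (hC : ∃ i, 1 ≤ i ∧ i ≤ N ∧ t i + y (n - i) ≤ C + b)
    (u v : ℕ → ℤ)
    (hu0 : C ≤ u 0)
    (hu1 : ∀ i, 1 ≤ i → i ≤ N → u i = t i)
    (hu2 : ∀ i, N + 1 ≤ i → i ≤ M → C ≤ u i)
    (hv0 : b ≤ v 0)
    (hv1 : ∀ j, 1 ≤ j → j ≤ M → v j = y j) :
    minPlusConv (M + 1) u v n
      = ((Finset.Icc 1 N).inf' (Finset.nonempty_Icc.mpr hN) (fun i => t i + y (n - i)) : ℤ) := by
  have hsum : ∀ i ∈ Finset.Icc 1 N, u i + v (n - i) = t i + y (n - i) := fun i hi => by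
    obtain ⟨h1i, hiN⟩ := Finset.mem_Icc.mp hi
    rw [hu1 i h1i hiN, hv1 (n - i) (by omega) (by omega)]
  have hu_pad : ∀ i ≤ M, i ∉ Finset.Icc 1 N → C ≤ u i := fun i hiM hi => by
    rw [Finset.mem_Icc] at hi
    rcases i.eq_zero_or_pos with rfl | hpos
    · exact hu0
    · exact hu2 i (by omega) hiM
  have hv_lower : ∀ j ≤ M, b ≤ v j := fun j hjM => by
    rcases j.eq_zero_or_pos with rfl | hpos
    · exact hv0
    · exact (hy j hpos hjM).trans_eq (hv1 j hpos hjM).symm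
  rw [← Finset.inf'_congr (Finset.nonempty_Icc.mpr hN) rfl hsum]
  refine minPlusConv_eq_inf'_of_dominated _ (fun i hi => ?_) fun i j hi hj _ hiN => ?_
  · rw [Finset.mem_Icc] at hi
    omega
  · obtain ⟨i', h1i', hi'N, hle⟩ := hC
    have hi' : i' ∈ Finset.Icc 1 N := Finset.mem_Icc.mpr ⟨h1i', hi'N⟩
    refine ⟨i', hi', (hsum i' hi').trans_le (hle.trans ?_)⟩
    exact add_le_add (hu_pad i (Nat.le_of_lt_succ hi) hiN) (hv_lower j (Nat.le_of_lt_succ hj))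

/-- For `u = (C, t_1,…,t_N, C,…,C)` and `v = (C, y_1,…,y_{2N})`
of dimension `2N+1` (indexed from `0`), with `|t_i| ≤ B`, `|y_j| ≤ B`, and
`C ≥ 3B`, the `(min,+)`-convolution satisfies
`(u ∗ v)_{N+k} = min_{1 ≤ i ≤ N} (t_i + y_{N+k−i})` for all `1 ≤ k ≤ N`. -/
theorem stmt_8 (N : ℕ) (hN : 1 ≤ N) (B C : ℤ) (hB : 0 ≤ B) (hC : 3 * B ≤ C)
    (t y : ℕ → ℤ)
    (ht : ∀ i, 1 ≤ i → i ≤ N → |t i| ≤ B)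
    (hy : ∀ j, 1 ≤ j → j ≤ 2 * N → |y j| ≤ B)
    (u v : ℕ → ℤ)
    (hu0 : u 0 = C)
    (hu1 : ∀ i, 1 ≤ i → i ≤ N → u i = t i)
    (hu2 : ∀ i, N + 1 ≤ i → i ≤ 2 * N → u i = C)
    (hv0 : v 0 = C)
    (hv1 : ∀ j, 1 ≤ j → j ≤ 2 * N → v j = y j) :
    ∀ k, 1 ≤ k → k ≤ N →
      minPlusConv (2 * N + 1) u v (N + k)
        = ((Finset.Icc 1 N).inf' (Finset.nonempty_Icc.mpr hN)
            (fun i => t i + y (N + k - i)) : ℤ) := by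
  intro k hk1 hkN
  have ht_le := (abs_le.mp (ht 1 le_rfl hN)).2
  have hy_le := (abs_le.mp (hy (N + k - 1) (by omega) (by omega))).2
  exact stmt_8_general N (2 * N) (N + k) hN (by omega) (by omega) (-B) C t y
    (fun j h1j hj => (abs_le.mp (hy j h1j hj)).1) ⟨1, le_rfl, hN, by linarith⟩
    u v hu0.ge hu1 (fun i hNi hi => (hu2 i hNi hi).ge) (by linarith) hv1
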